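/- Let A be a unital *-algebra over C = R(i), R an ordered ring. Then A has sufficiently many positive linear functionals if and only if A has a faithful *-representation on some pre-Hilbert space over C. In this case A is *-isomorphic to a *-subalgebra of B(H) for some pre-Hilbert space H over C. -/

import Mathlib

/-!
The GNS construction realizes a positive functional `ω` as `a ↦ ⟨φ, π a φ⟩` on the quotient of `A`
by `{a | ω(a* a) = 0}`, so the direct sum of all GNS representations kills only the elements
on which every positive functional vanishes. Functionals that separate the Hermitian elements
separate all elements: if every `ω a` vanishes, then so does `a + a*`, hence `i a` is Hermitian and
vanishes too. Conversely, each vector `φ` of a representation gives the positive functional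
`a ↦ ⟨φ, π a φ⟩`, and by polarization `π h = 0` as soon as all of these vanish at `h`. The ring
`R` may lack inverses, even of `2`, so polarization and the degenerate case of Cauchy–Schwarz have
to avoid division.
-/

open Polynomial

/-- An *ordered ring*: positivity cone `P` with `P·P ⊆ P`, `P + P ⊆ P`,
`R = −P ∪ {0} ∪ P` disjointly. -/
def IsOrderedCone {R : Type*} [CommRing R] (P : Set R) : Prop :=
  (∀ a ∈ P, ∀ b ∈ P, a * b ∈ P) ∧
  (∀ a ∈ P, ∀ b ∈ P, a + b ∈ P) ∧
  (∀ a : R, a ∈ P ∨ a = 0 ∨ -a ∈ P) ∧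
  (∀ a ∈ P, a ≠ (0 : R)) ∧
  (∀ a ∈ P, -a ∉ P)

noncomputable section

set_option maxRecDepth 8000

/-- The ring extension `C = R(i)` of `R` by a square root `i` of `-1`. -/
abbrev Cplx (R : Type*) [CommRing R] := AdjoinRoot (X ^ 2 + 1 : R[X])

/-- The square root of `-1` in `C = R(i)`. -/
def Cplx.I (R : Type*) [CommRing R] : Cplx R := AdjoinRoot.root _

/-- Complex conjugation `z ↦ z̄` on `C = R(i)`: the ring endomorphism fixing `R`
and sending `i` to `-i`. -/
def Cplx.conj {R : Type*} [CommRing R] : Cplx R →+* Cplx R :=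
  AdjoinRoot.lift (algebraMap R _) (-(AdjoinRoot.root _)) (by
    have h := AdjoinRoot.eval₂_root (X ^ 2 + 1 : R[X])
    rw [AdjoinRoot.algebraMap_eq]
    simp only [eval₂_add, eval₂_pow, eval₂_X, eval₂_one, neg_sq] at h ⊢
    exact h)

/-- `z ∈ C = R(i)` is *nonnegative* (w.r.t. the cone `P` of `R`) if it lies in `R`
and is zero or positive there. -/
def Cplx.nonneg {R : Type*} [CommRing R] (P : Set R) (z : Cplx R) : Prop :=
  ∃ r : R, (r ∈ P ∨ r = 0) ∧ z = algebraMap R (Cplx R) r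

/-- `z ∈ C = R(i)` is *positive* if it lies in `R` and is positive there. -/
def Cplx.pos {R : Type*} [CommRing R] (P : Set R) (z : Cplx R) : Prop :=
  ∃ r ∈ P, z = algebraMap R (Cplx R) r

/-- `z ≤ w` in `C = R(i)` iff `w - z` is nonnegative. -/
def Cplx.le {R : Type*} [CommRing R] (P : Set R) (z w : Cplx R) : Prop :=
  Cplx.nonneg P (w - z)

universe u v

/-- A `*`-algebra over `C = R(i)`: an associative unital `C`-algebra `A` equipped with
an involutive anti-linear anti-automorphism (a `*`-involution). -/
structure StarStructure (R : Type*) [CommRing R] (A : Type*) [Ring A]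
    [Algebra (Cplx R) A] where
  star : A → A
  star_add : ∀ a b : A, star (a + b) = star a + star b
  star_mul : ∀ a b : A, star (a * b) = star b * star a
  star_star : ∀ a : A, star (star a) = a
  star_smul : ∀ (z : Cplx R) (a : A), star (z • a) = Cplx.conj z • star a
  star_one : star (1 : A) = 1

/-- A `C`-linear functional `ω : A → C` is *positive* if `ω(a* a) ≥ 0` for all `a`. -/
def IsPosFunctional {R : Type*} [CommRing R] (P : Set R) {A : Type*} [Ring A]
    [Algebra (Cplx R) A] (S : StarStructure R A) (ω : A → Cplx R) : Prop :=
  (∀ a b : A, ω (a + b) = ω a + ω b) ∧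
  (∀ (z : Cplx R) (a : A), ω (z • a) = z * ω a) ∧
  (∀ a : A, Cplx.nonneg P (ω (S.star a * a)))

/-- A *pre-Hilbert space* structure over `C = R(i)`: an inner product which is
`C`-linear in the second argument, Hermitian, and positive definite. -/
structure PreInner (R : Type*) [CommRing R] (P : Set R) (H : Type*) [AddCommGroup H]
    [Module (Cplx R) H] where
  inner : H → H → Cplx R
  inner_add_right : ∀ φ ψ χ : H, inner φ (ψ + χ) = inner φ ψ + inner φ χ
  inner_smul_right : ∀ (z : Cplx R) (φ ψ : H), inner φ (z • ψ) = z * inner φ ψ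
  inner_herm : ∀ φ ψ : H, inner φ ψ = Cplx.conj (inner ψ φ)
  inner_posdef : ∀ φ : H, φ ≠ 0 → Cplx.pos P (inner φ φ)

/-- A `*`-representation of a `*`-algebra `A` over `C = R(i)` on a pre-Hilbert space
over `C`: a unital homomorphism into the adjointable operators `B(H)`. -/
structure StarRep (R : Type u) [CommRing R] (P : Set R) (A : Type v) [Ring A]
    [Algebra (Cplx R) A] (S : StarStructure R A) : Type (max u v (w + 1)) where
  carrier : Type w
  [grp : AddCommGroup carrier]
  [mod : Module (Cplx R) carrier]
  ip : PreInner R P carrier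
  π : A → carrier → carrier
  π_add_vec : ∀ (a : A) (φ ψ : carrier), π a (φ + ψ) = π a φ + π a ψ
  π_smul_vec : ∀ (a : A) (z : Cplx R) (φ : carrier), π a (z • φ) = z • π a φ
  π_one : ∀ φ : carrier, π 1 φ = φ
  π_add : ∀ (a b : A) (φ : carrier), π (a + b) φ = π a φ + π b φ
  π_smul : ∀ (z : Cplx R) (a : A) (φ : carrier), π (z • a) φ = z • π a φ
  π_mul : ∀ (a b : A) (φ : carrier), π (a * b) φ = π a (π b φ)
  π_star : ∀ (a : A) (φ ψ : carrier),
    ip.inner (π a φ) ψ = ip.inner φ (π (S.star a) ψ)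

/-- `A` has *sufficiently many positive linear functionals* if every nonzero Hermitian
element has a nonzero expectation value in some positive linear functional. -/
def HasSufficientlyManyPos {R : Type*} [CommRing R] (P : Set R) {A : Type*} [Ring A]
    [Algebra (Cplx R) A] (S : StarStructure R A) : Prop :=
  ∀ h : A, h ≠ 0 → S.star h = h →
    ∃ ω : A → Cplx R, IsPosFunctional P S ω ∧ ω h ≠ 0

open scoped DirectSum

namespace IsOrderedCone

variable {R : Type*} [CommRing R] {P : Set R}

theorem mul_mem (hP : IsOrderedCone P) {a b : R} (ha : a ∈ P) (hb : b ∈ P) : a * b ∈ P :=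
  hP.1 a ha b hb

theorem add_mem (hP : IsOrderedCone P) {a b : R} (ha : a ∈ P) (hb : b ∈ P) : a + b ∈ P :=
  hP.2.1 a ha b hb

theorem mem_or_eq_zero_or_neg_mem (hP : IsOrderedCone P) (a : R) : a ∈ P ∨ a = 0 ∨ -a ∈ P :=
  hP.2.2.1 a

theorem zero_notMem (hP : IsOrderedCone P) : (0 : R) ∉ P := fun h => hP.2.2.2.1 0 h rfl

theorem mul_self_mem (hP : IsOrderedCone P) {a : R} (ha : a ≠ 0) : a * a ∈ P := by
  rcases hP.mem_or_eq_zero_or_neg_mem a with h | h | h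
  · exact hP.mul_mem h h
  · exact absurd h ha
  · simpa only [neg_mul_neg] using hP.mul_mem h h

theorem mul_self_add_mul_self_mem (hP : IsOrderedCone P) {a b : R} (h : ¬(a = 0 ∧ b = 0)) :
    a * a + b * b ∈ P := by
  by_cases ha : a = 0
  · have hb : b ≠ 0 := fun hb => h ⟨ha, hb⟩
    simpa [ha] using hP.mul_self_mem hb
  · by_cases hb : b = 0
    · simpa [hb] using hP.mul_self_mem ha
    · exact hP.add_mem (hP.mul_self_mem ha) (hP.mul_self_mem hb)

end IsOrderedCone

namespace Cplx

section Arithmetic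

variable {R : Type*} [CommRing R]

theorem I_mul_I : I R * I R = -1 := by
  have h := AdjoinRoot.eval₂_root (X ^ 2 + 1 : R[X])
  simp only [eval₂_add, eval₂_pow, eval₂_X, eval₂_one] at h
  rw [I]
  linear_combination h

theorem conj_I : conj (I R) = -I R :=
  AdjoinRoot.lift_root _

theorem conj_algebraMap (r : R) : conj (algebraMap R (Cplx R) r) = algebraMap R (Cplx R) r :=
  AdjoinRoot.lift_of _

theorem monic_X_sq_add_one : (X ^ 2 + 1 : R[X]).Monic := by
  simpa only [C_1] using monic_X_pow_add_C (1 : R) two_ne_zero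

theorem natDegree_X_sq_add_one [Nontrivial R] : (X ^ 2 + 1 : R[X]).natDegree = 2 := by
  simpa only [C_1] using natDegree_X_pow_add_C (n := 2) (r := (1 : R))

theorem algebraMap_injective : Function.Injective (algebraMap R (Cplx R)) := by
  nontriviality R
  refine (injective_iff_map_eq_zero _).2 fun r hr => ?_
  by_contra hne
  refine monic_X_sq_add_one.not_dvd_of_natDegree_lt (C_ne_zero.2 hne) ?_
    (AdjoinRoot.mk_eq_zero.1 hr)
  rw [natDegree_C, natDegree_X_sq_add_one]
  exact two_pos

theorem exists_eq_add_mul_I (z : Cplx R) :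
    ∃ x y : R, z = algebraMap R (Cplx R) x + algebraMap R (Cplx R) y * I R := by
  cases subsingleton_or_nontrivial R with
  | inl _ =>
    have := Module.subsingleton R (Cplx R)
    exact ⟨0, 0, Subsingleton.elim _ _⟩
  | inr _ =>
    have hlt : (AdjoinRoot.modByMonicHom monic_X_sq_add_one z).natDegree < 2 := by
      obtain ⟨p, rfl⟩ := AdjoinRoot.mk_surjective z
      rw [AdjoinRoot.modByMonicHom_mk]
      exact (natDegree_modByMonic_lt p monic_X_sq_add_one
        (ne_of_apply_ne natDegree (by simp [natDegree_X_sq_add_one]))).trans_eq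
        natDegree_X_sq_add_one
    obtain ⟨y, x, hp⟩ := exists_eq_X_add_C_of_natDegree_le_one (Nat.le_of_lt_succ hlt)
    refine ⟨x, y, ?_⟩
    rw [← AdjoinRoot.mk_leftInverse monic_X_sq_add_one z, hp, map_add, map_mul, AdjoinRoot.mk_X,
      add_comm]
    rfl

end Arithmetic

section Positivity

variable {R : Type*} [CommRing R] {P : Set R} {z w : Cplx R}

theorem nonneg_iff_eq_zero_or_pos : nonneg P z ↔ z = 0 ∨ pos P z := by
  constructor
  · rintro ⟨r, hr | rfl, rfl⟩
    · exact Or.inr ⟨r, hr, rfl⟩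
    · exact Or.inl (map_zero _)
  · rintro (rfl | ⟨r, hr, rfl⟩)
    · exact ⟨0, Or.inr rfl, (map_zero _).symm⟩
    · exact ⟨r, Or.inl hr, rfl⟩

theorem nonneg.conj_eq (hz : nonneg P z) : conj z = z := by
  obtain ⟨r, -, rfl⟩ := hz
  exact conj_algebraMap r

theorem pos.nonneg (hz : pos P z) : Cplx.nonneg P z :=
  nonneg_iff_eq_zero_or_pos.2 (Or.inr hz)

theorem pos.ne_zero (hP : IsOrderedCone P) (hz : pos P z) : z ≠ 0 := by
  obtain ⟨r, hr, rfl⟩ := hz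
  intro h
  exact hP.zero_notMem ((map_eq_zero_iff _ algebraMap_injective).1 h ▸ hr)

theorem pos.add (hP : IsOrderedCone P) (hz : pos P z) (hw : pos P w) : pos P (z + w) := by
  obtain ⟨r, hr, rfl⟩ := hz
  obtain ⟨s, hs, rfl⟩ := hw
  exact ⟨r + s, hP.add_mem hr hs, (map_add _ r s).symm⟩

theorem pos.mul (hP : IsOrderedCone P) (hz : pos P z) (hw : pos P w) : pos P (z * w) := by
  obtain ⟨r, hr, rfl⟩ := hz
  obtain ⟨s, hs, rfl⟩ := hw
  exact ⟨r * s, hP.mul_mem hr hs, (map_mul _ r s).symm⟩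

theorem nonneg.add_pos (hP : IsOrderedCone P) (hz : nonneg P z) (hw : pos P w) :
    pos P (z + w) := by
  rcases nonneg_iff_eq_zero_or_pos.1 hz with rfl | hz
  · rwa [zero_add]
  · exact hz.add hP hw

theorem pos.not_nonneg_neg (hP : IsOrderedCone P) (hz : pos P z) :
    ¬Cplx.nonneg P (-z) := fun h =>
  (h.add_pos hP hz).ne_zero hP (neg_add_cancel z)

theorem pos_mul_conj_self (hP : IsOrderedCone P) (hz : z ≠ 0) : pos P (z * conj z) := by
  obtain ⟨x, y, rfl⟩ := exists_eq_add_mul_I z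
  refine ⟨x * x + y * y, hP.mul_self_add_mul_self_mem ?_, ?_⟩
  · rintro ⟨rfl, rfl⟩
    simp at hz
  · simp only [map_add, map_mul, conj_algebraMap, conj_I]
    linear_combination -(algebraMap R (Cplx R) y) ^ 2 * I_mul_I (R := R)

theorem eq_zero_of_two_mul_eq_zero (hP : IsOrderedCone P) (h : 2 * z = 0) : z = 0 := by
  by_contra hz
  have hpos := pos_mul_conj_self hP hz
  exact (hpos.add hP hpos).ne_zero hP (by linear_combination conj z * h)

end Positivity

/-- Sesquilinear forms on a `C`-module, conjugate-linear in the first argument as in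
`PreInner`. -/
abbrev SesqForm (R : Type*) [CommRing R] (V : Type*) [AddCommGroup V] [Module (Cplx R) V] :=
  V →ₛₗ[conj (R := R)] V →ₗ[Cplx R] Cplx R

namespace SesqForm

variable {R : Type*} [CommRing R] {P : Set R} {V : Type*} [AddCommGroup V] [Module (Cplx R) V]
  {B : SesqForm R V}

/-- Positive semidefiniteness with respect to the cone `P`. Hermitian symmetry is not part of
the definition, see `IsPosSemidef.isSymm`. -/
def IsPosSemidef (P : Set R) (B : SesqForm R V) : Prop :=
  ∀ x, nonneg P (B x x)

/-- Positive definiteness with respect to the cone `P`. Hermitian symmetry is not part of the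
definition, see `IsPosSemidef.isSymm`. -/
def IsPosDef (P : Set R) (B : SesqForm R V) : Prop :=
  ∀ x, x ≠ 0 → pos P (B x x)

theorem IsPosDef.isPosSemidef (hB : B.IsPosDef P) : B.IsPosSemidef P := by
  intro x
  by_cases hx : x = 0
  · exact nonneg_iff_eq_zero_or_pos.2 (Or.inl (by rw [hx, map_zero]))
  · exact (hB x hx).nonneg

theorem apply_add_self (B : SesqForm R V) (x y : V) :
    B (x + y) (x + y) = B x x + B y y + (B x y + B y x) := by
  simp only [map_add, LinearMap.add_apply]
  ring

theorem apply_add_I_smul_self (B : SesqForm R V) (x y : V) :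
    B (x + I R • y) (x + I R • y) = B x x + B y y + I R * (B x y - B y x) := by
  simp only [map_add, map_smulₛₗ, LinearMap.add_apply, LinearMap.smul_apply, smul_eq_mul,
    conj_I, RingHom.id_apply]
  linear_combination -B y y * I_mul_I (R := R)

theorem eq_zero_of_apply_self_eq_zero (hP : IsOrderedCone P) (hB : ∀ x, B x x = 0) : B = 0 := by
  ext x y
  have hadd := apply_add_self B x y
  have hI := apply_add_I_smul_self B x y
  simp only [hB] at hadd hI
  refine eq_zero_of_two_mul_eq_zero hP ?_
  linear_combination -hadd + I R * hI + (B x y - B y x) * I_mul_I (R := R)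

theorem IsPosSemidef.isSymm (hP : IsOrderedCone P) (hB : B.IsPosSemidef P) : B.IsSymm where
  eq x y := by
    have hreal (v : V) : conj (B v v) = B v v := (hB v).conj_eq
    have hadd := hreal (x + y)
    have hI := hreal (x + I R • y)
    rw [apply_add_self] at hadd
    rw [apply_add_I_smul_self] at hI
    simp only [map_add, map_sub, map_mul, conj_I, hreal] at hadd hI
    refine sub_eq_zero.1 (eq_zero_of_two_mul_eq_zero hP ?_)
    linear_combination hadd + I R * hI +
      (conj (B x y) - conj (B y x) + B x y - B y x) * I_mul_I (R := R)

theorem IsPosSemidef.apply_eq_zero (hP : IsOrderedCone P) (hB : B.IsPosSemidef P) {x : V}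
    (hx : B x x = 0) : B x = 0 := by
  ext y
  rw [LinearMap.zero_apply]
  by_contra hne
  set z := B x y
  set n := z * conj z with hn_def
  have hn : pos P n := pos_mul_conj_self hP hne
  have hsymm : B y x = conj z := ((hB.isSymm hP).eq x y).symm
  set q := B y y
  have hconj_n : conj n = n := hn.nonneg.conj_eq
  have hconj_q : conj q = q := (hB y).conj_eq
  -- With `R` a field one would use `y - (k z) • x` for a large scalar `k`; here `k = (q + n) / n`
  -- and the denominator `n` is cleared.
  let v := n • y - ((q + n) * z) • x
  have hv : B v v = -(n * n * (q + n + n)) := by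
    simp only [v, map_sub, map_smulₛₗ, LinearMap.sub_apply, LinearMap.smul_apply, smul_eq_mul,
      map_mul, map_add, RingHom.id_apply, hx, hsymm, hconj_n, hconj_q]
    linear_combination (2 * n * (q + n)) * hn_def
  refine pos.not_nonneg_neg hP ?_ (hv ▸ hB v)
  exact (hn.mul hP hn).mul hP (((hB y).add_pos hP hn).add hP hn)

theorem IsPosSemidef.isPosDef_quotient (hP : IsOrderedCone P) (hB : B.IsPosSemidef P) :
    IsPosDef P ((hB.isSymm hP).isRefl.liftQ₂ B (LinearMap.ker B) le_rfl) := by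
  intro x
  induction x using Submodule.Quotient.induction_on with | H x =>
  intro hx
  refine (nonneg_iff_eq_zero_or_pos.1 (hB x)).resolve_left fun h => hx ?_
  exact (Submodule.Quotient.mk_eq_zero _).2 (hB.apply_eq_zero hP h)

/-- The pre-Hilbert space structure defined by a positive definite sesquilinear form. -/
def IsPosDef.toPreInner (hP : IsOrderedCone P) (hB : B.IsPosDef P) : PreInner R P V where
  inner x y := B x y
  inner_add_right x := map_add (B x)
  inner_smul_right z x y := map_smul (B x) z y
  inner_herm x y := ((hB.isPosSemidef.isSymm hP).eq y x).symm
  inner_posdef := hB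

section DirectSum

variable {ι : Type*} [DecidableEq ι] {W : ι → Type*} [∀ i, AddCommGroup (W i)]
  [∀ i, Module (Cplx R) (W i)]

/-- The orthogonal direct sum of sesquilinear forms, `B(x, y) = ∑ i, B i (x i) (y i)`. -/
def directSum (B : ∀ i, SesqForm R (W i)) : SesqForm R (⨁ i, W i) where
  toFun x := DirectSum.toModule (Cplx R) ι (Cplx R) fun i => B i (x i)
  map_add' x y := by
    ext i w
    simp
  map_smul' z x := by
    ext i w
    simp [DirectSum.smul_apply]

theorem directSum_apply_lof (B : ∀ i, SesqForm R (W i)) (x : ⨁ i, W i) (i : ι) (w : W i) :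
    directSum B x (DirectSum.lof (Cplx R) ι W i w) = B i (x i) w :=
  DirectSum.toModule_lof _ i w

theorem isPosDef_directSum (hP : IsOrderedCone P) {B : ∀ i, SesqForm R (W i)}
    (hB : ∀ i, (B i).IsPosDef P) : (directSum B).IsPosDef P := by
  classical
  intro x hx
  have hsum : directSum B x x = ∑ i ∈ DFinsupp.support x, B i (x i) (x i) :=
    DFinsupp.sumAddHom_apply _ _
  have hne : (DFinsupp.support x).Nonempty :=
    Finset.nonempty_iff_ne_empty.2 (mt DFinsupp.support_eq_empty.1 hx)
  rw [hsum]
  exact Finset.sum_induction_nonempty _ (pos P) (fun _ _ hz hw => hz.add hP hw) hne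
    fun i hi => hB i _ (DFinsupp.mem_support_iff.1 hi)

end DirectSum

end SesqForm

end Cplx

/-- The inner product of a pre-Hilbert space as a bundled sesquilinear form. -/
def PreInner.form {R : Type*} [CommRing R] {P : Set R} {H : Type*} [AddCommGroup H]
    [Module (Cplx R) H] (ip : PreInner R P H) : Cplx.SesqForm R H :=
  LinearMap.mk₂'ₛₗ Cplx.conj (RingHom.id (Cplx R)) ip.inner
    (fun φ ψ χ => by
      rw [ip.inner_herm, ip.inner_add_right, map_add, ← ip.inner_herm, ← ip.inner_herm])
    (fun z φ ψ => by
      rw [ip.inner_herm, ip.inner_smul_right, map_mul, ← ip.inner_herm, smul_eq_mul])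
    ip.inner_add_right ip.inner_smul_right

theorem PreInner.isPosDef_form {R : Type*} [CommRing R] {P : Set R} {H : Type*} [AddCommGroup H]
    [Module (Cplx R) H] (ip : PreInner R P H) : ip.form.IsPosDef P :=
  ip.inner_posdef

namespace StarStructure

variable {R : Type*} [CommRing R] {A : Type*} [Ring A] [Algebra (Cplx R) A]
  (S : StarStructure R A)

/-- The involution of a `*`-algebra as a conjugate-linear map. -/
def starₛₗ : A →ₛₗ[Cplx.conj (R := R)] A where
  toFun := S.star
  map_add' := S.star_add
  map_smul' := S.star_smul

/-- The form `(a, b) ↦ ω(a* b)` of the GNS construction. -/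
def gnsForm (ω : A →ₗ[Cplx R] Cplx R) : Cplx.SesqForm R A :=
  ((LinearMap.mul (Cplx R) A).compr₂ ω).comp S.starₛₗ

theorem gnsForm_apply (ω : A →ₗ[Cplx R] Cplx R) (a b : A) :
    S.gnsForm ω a b = ω (S.star a * b) :=
  rfl

theorem gnsForm_mul_left (ω : A →ₗ[Cplx R] Cplx R) (a b c : A) :
    S.gnsForm ω (a * b) c = S.gnsForm ω b (S.star a * c) := by
  rw [gnsForm_apply, gnsForm_apply, S.star_mul, mul_assoc]

theorem ker_gnsForm_le_comap_mulLeft (ω : A →ₗ[Cplx R] Cplx R) (a : A) :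
    LinearMap.ker (S.gnsForm ω) ≤
      (LinearMap.ker (S.gnsForm ω)).comap (LinearMap.mulLeft (Cplx R) a) := by
  intro b hb
  ext c
  exact (S.gnsForm_mul_left ω a b c).trans (LinearMap.congr_fun hb _)

end StarStructure

namespace IsPosFunctional

variable {R : Type*} [CommRing R] {P : Set R} {A : Type*} [Ring A] [Algebra (Cplx R) A]
  {S : StarStructure R A} {ω : A → Cplx R}

/-- A positive functional as a bundled linear map. -/
def toLinearMap (hω : IsPosFunctional P S ω) : A →ₗ[Cplx R] Cplx R where
  toFun := ω
  map_add' := hω.1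
  map_smul' := hω.2.1

theorem isPosSemidef_gnsForm (hω : IsPosFunctional P S ω) :
    (S.gnsForm hω.toLinearMap).IsPosSemidef P :=
  hω.2.2

theorem map_sub (hω : IsPosFunctional P S ω) (a b : A) : ω (a - b) = ω a - ω b :=
  _root_.map_sub hω.toLinearMap a b

theorem map_star (hP : IsOrderedCone P) (hω : IsPosFunctional P S ω) (a : A) :
    ω (S.star a) = Cplx.conj (ω a) := by
  have hsymm := (hω.isPosSemidef_gnsForm.isSymm hP).eq 1 a
  rw [S.gnsForm_apply, S.gnsForm_apply, S.star_one, one_mul, mul_one] at hsymm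
  exact hsymm.symm

end IsPosFunctional

theorem HasSufficientlyManyPos.eq_zero {R : Type*} [CommRing R] {P : Set R} {A : Type*} [Ring A]
    [Algebra (Cplx R) A] {S : StarStructure R A} (hS : HasSufficientlyManyPos P S)
    (hP : IsOrderedCone P) {a : A} (ha : ∀ ω, IsPosFunctional P S ω → ω a = 0) : a = 0 := by
  have eq_zero_of_star_eq {h : A} (hh : S.star h = h)
      (hω : ∀ ω, IsPosFunctional P S ω → ω h = 0) : h = 0 := by
    by_contra hne
    obtain ⟨ω, hpos, hωh⟩ := hS h hne hh
    exact hωh (hω ω hpos)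
  have hre : a + S.star a = 0 := by
    refine eq_zero_of_star_eq (by rw [S.star_add, S.star_star, add_comm]) fun ω hω => ?_
    rw [hω.1, hω.map_star hP, ha ω hω, map_zero, add_zero]
  have him : Cplx.I R • a = 0 := by
    refine eq_zero_of_star_eq ?_ fun ω hω => by rw [hω.2.1, ha ω hω, mul_zero]
    rw [S.star_smul, Cplx.conj_I, eq_neg_of_add_eq_zero_right hre, neg_smul_neg]
  calc a = -(Cplx.I R • Cplx.I R • a) := by rw [smul_smul, Cplx.I_mul_I, neg_one_smul, neg_neg]
    _ = 0 := by rw [him, smul_zero, neg_zero]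

namespace StarRep

variable {R : Type u} [CommRing R] {P : Set R} {A : Type v} [Ring A] [Algebra (Cplx R) A]
  {S : StarStructure R A}

instance (ρ : StarRep R P A S) : AddCommGroup ρ.carrier := ρ.grp

instance (ρ : StarRep R P A S) : Module (Cplx R) ρ.carrier := ρ.mod

/-- The operator `π a` as a bundled linear map. -/
def op (ρ : StarRep R P A S) (a : A) : ρ.carrier →ₗ[Cplx R] ρ.carrier where
  toFun := ρ.π a
  map_add' := ρ.π_add_vec a
  map_smul' := ρ.π_smul_vec a

theorem π_zero (ρ : StarRep R P A S) (φ : ρ.carrier) : ρ.π 0 φ = 0 := by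
  rw [← zero_smul (Cplx R) (0 : A), ρ.π_smul, zero_smul]

/-- The functionals of the form `a ↦ ⟨φ, π a φ⟩` for a vector `φ` of the representation. -/
def IsVectorFunctional (ρ : StarRep R P A S) (ω : A → Cplx R) : Prop :=
  ∃ φ, ∀ a, ω a = ρ.ip.inner φ (ρ.π a φ)

theorem IsVectorFunctional.isPosFunctional {ρ : StarRep R P A S} {ω : A → Cplx R}
    (hω : ρ.IsVectorFunctional ω) : IsPosFunctional P S ω := by
  obtain ⟨φ, hφ⟩ := hω
  refine ⟨fun a b => ?_, fun z a => ?_, fun a => ?_⟩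
  · simp only [hφ, ρ.π_add, ρ.ip.inner_add_right]
  · simp only [hφ, ρ.π_smul, ρ.ip.inner_smul_right]
  · rw [hφ, ρ.π_mul, ← ρ.π_star]
    exact ρ.ip.isPosDef_form.isPosSemidef (ρ.π a φ)

theorem π_eq_zero_of_inner_self (hP : IsOrderedCone P) (ρ : StarRep R P A S) {a : A}
    (ha : ∀ φ, ρ.ip.inner φ (ρ.π a φ) = 0) (φ : ρ.carrier) : ρ.π a φ = 0 := by
  have hform : ρ.ip.form.compl₂ (ρ.op a) = 0 :=
    Cplx.SesqForm.eq_zero_of_apply_self_eq_zero hP ha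
  by_contra hne
  exact (ρ.ip.inner_posdef _ hne).ne_zero hP (LinearMap.congr_fun₂ hform (ρ.π a φ) φ)

/-- The GNS representation of a positive functional `ω`: left multiplication on the quotient of
`A` by `{a | ω(a* a) = 0}`, encoded as the kernel of the form `ω(a* b)`. -/
def gns (hP : IsOrderedCone P) {ω : A → Cplx R} (hω : IsPosFunctional P S ω) :
    StarRep.{u, v, v} R P A S where
  carrier := A ⧸ LinearMap.ker (S.gnsForm hω.toLinearMap)
  ip := (hω.isPosSemidef_gnsForm.isPosDef_quotient hP).toPreInner hP
  π a := Submodule.mapQ _ _ (LinearMap.mulLeft (Cplx R) a)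
    (S.ker_gnsForm_le_comap_mulLeft hω.toLinearMap a)
  π_add_vec _ := map_add _
  π_smul_vec _ := map_smul _
  π_one := by
    rintro ⟨b⟩
    exact congrArg Submodule.Quotient.mk (one_mul b)
  π_add := by
    rintro a b ⟨c⟩
    exact congrArg Submodule.Quotient.mk (add_mul a b c)
  π_smul := by
    rintro z a ⟨b⟩
    exact congrArg Submodule.Quotient.mk (smul_mul_assoc z a b)
  π_mul := by
    rintro a b ⟨c⟩
    exact congrArg Submodule.Quotient.mk (mul_assoc a b c)
  π_star := by
    rintro a ⟨b⟩ ⟨c⟩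
    exact S.gnsForm_mul_left hω.toLinearMap a b c

theorem isVectorFunctional_gns (hP : IsOrderedCone P) {ω : A → Cplx R}
    (hω : IsPosFunctional P S ω) : (gns hP hω).IsVectorFunctional ω := by
  refine ⟨Submodule.Quotient.mk 1, fun a => ?_⟩
  change ω a = ω (S.star 1 * (a * 1))
  rw [S.star_one, one_mul, mul_one]

/-- The orthogonal direct sum of a family of `*`-representations. -/
def directSum (hP : IsOrderedCone P) {ι : Type*} [DecidableEq ι] (ρ : ι → StarRep R P A S) :
    StarRep R P A S where
  carrier := ⨁ i, (ρ i).carrier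
  ip := (Cplx.SesqForm.isPosDef_directSum hP fun i => (ρ i).ip.isPosDef_form).toPreInner hP
  π a := DirectSum.lmap fun i => (ρ i).op a
  π_add_vec _ := map_add _
  π_smul_vec _ := map_smul _
  π_one φ := DFinsupp.ext fun i => (ρ i).π_one (φ i)
  π_add a b φ := DFinsupp.ext fun i => (ρ i).π_add a b (φ i)
  π_smul z a φ := DFinsupp.ext fun i => (ρ i).π_smul z a (φ i)
  π_mul a b φ := DFinsupp.ext fun i => (ρ i).π_mul a b (φ i)
  π_star a φ ψ := by
    let B := Cplx.SesqForm.directSum fun i => (ρ i).ip.form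
    suffices h : B (DirectSum.lmap (fun i => (ρ i).op a) φ) =
        (B φ).comp (DirectSum.lmap fun i => (ρ i).op (S.star a)) from LinearMap.congr_fun h ψ
    ext i χ
    simp only [LinearMap.comp_apply, DirectSum.lmap_lof, B, Cplx.SesqForm.directSum_apply_lof]
    exact (ρ i).π_star a (φ i) χ

theorem IsVectorFunctional.directSum (hP : IsOrderedCone P) {ι : Type*} [DecidableEq ι]
    (ρ : ι → StarRep R P A S) (i : ι) {ω : A → Cplx R} (hω : (ρ i).IsVectorFunctional ω) :
    (directSum hP ρ).IsVectorFunctional ω := by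
  obtain ⟨φ, hφ⟩ := hω
  refine ⟨DirectSum.lof (Cplx R) ι (fun i => (ρ i).carrier) i φ, fun a => (hφ a).trans ?_⟩
  change _ = Cplx.SesqForm.directSum (fun i => (ρ i).ip.form) _
    (DirectSum.lmap (fun i => (ρ i).op a) (DirectSum.lof (Cplx R) ι _ i φ))
  rw [DirectSum.lmap_lof, Cplx.SesqForm.directSum_apply_lof, DirectSum.lof_apply]
  rfl

open scoped Classical in
/-- The universal representation: the direct sum of the GNS representations of all positive
functionals. -/
def universal (hP : IsOrderedCone P) (S : StarStructure R A) : StarRep.{u, v, max u v} R P A S :=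
  directSum hP fun ω : {ω : A → Cplx R // IsPosFunctional P S ω} => gns hP ω.2

theorem isVectorFunctional_universal (hP : IsOrderedCone P) {ω : A → Cplx R}
    (hω : IsPosFunctional P S ω) : (universal hP S).IsVectorFunctional ω := by
  classical
  exact IsVectorFunctional.directSum hP
    (fun ω : {ω : A → Cplx R // IsPosFunctional P S ω} => gns hP ω.2) ⟨ω, hω⟩
    (isVectorFunctional_gns hP hω)

end StarRep

/-- A unital `*`-algebra `A` over `C = R(i)` has sufficiently many
positive linear functionals if and only if it has a faithful `*`-representation on
some pre-Hilbert space over `C`; in this case `A` can be viewed as a `*`-subalgebra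
of some `B(H)` (the representation `π` being an injective unital `*`-homomorphism
into the adjointable operators). -/
theorem sufficiently_many_iff_faithful_rep
    (R : Type u) [CommRing R] (P : Set R) (hP : IsOrderedCone P)
    (A : Type v) [Ring A] [Algebra (Cplx R) A] (S : StarStructure R A) :
    HasSufficientlyManyPos P S ↔
      ∃ ρ : StarRep.{u, v, max u v} R P A S, Function.Injective ρ.π := by
  constructor
  · intro hS
    refine ⟨StarRep.universal hP S, fun a b hab => sub_eq_zero.1 (hS.eq_zero hP fun ω hω => ?_)⟩
    obtain ⟨φ, hφ⟩ := StarRep.isVectorFunctional_universal hP hω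
    rw [hω.map_sub, hφ a, hφ b, hab, sub_self]
  · rintro ⟨ρ, hρ⟩ h hne _
    by_contra! hω
    have hπ : ρ.π h = ρ.π 0 := funext fun φ => by
      rw [ρ.π_zero, ρ.π_eq_zero_of_inner_self hP]
      exact fun ψ => hω _ (StarRep.IsVectorFunctional.isPosFunctional ⟨ψ, fun _ => rfl⟩)
    exact hne (hρ hπ)
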